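/- arXiv:1006.3266 — 2 statements merged into one kernel-verified Lean document; each statement's English description precedes it below -/
import Mathlib

section
/- If H is an abelian subgroup of Sym_n such that the stabilizers of 1 and of n in H are both trivial, then the monoid S_n(H) is cancellative. -/
/-- The word `a_{σ(1)} ⋯ a_{σ(n)}` in the free monoid on `n` generators. -/
def permWord {n : ℕ} (σ : Equiv.Perm (Fin n)) : FreeMonoid (Fin n) :=
  FreeMonoid.ofList (List.ofFn fun i => σ i)

/-- The defining relations of `S_n(H)`. -/
def snRel (n : ℕ) (H : Set (Equiv.Perm (Fin n)))
    (a b : FreeMonoid (Fin n)) : Prop :=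
  ∃ σ ∈ H, a = permWord 1 ∧ b = permWord σ

/-- The congruence generated by the relations of `S_n(H)`. -/
def snCon (n : ℕ) (H : Set (Equiv.Perm (Fin n))) : Con (FreeMonoid (Fin n)) :=
  conGen (snRel n H)

/-- The monoid `S_n(H)` presented by `a_1,…,a_n` with relations
`a_1⋯a_n = a_{σ(1)}⋯a_{σ(n)}` for `σ ∈ H`. -/
abbrev SnMonoid (n : ℕ) (H : Set (Equiv.Perm (Fin n))) : Type :=
  (snCon n H).Quotient

/-- The canonical projection `π : FM_n → S_n(H)`. -/
def snPi (n : ℕ) (H : Set (Equiv.Perm (Fin n))) :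
    FreeMonoid (Fin n) →* SnMonoid n H :=
  (snCon n H).mk'

/-- The generator `a_i` of `S_n(H)`. -/
def aGen (n : ℕ) (H : Set (Equiv.Perm (Fin n))) (i : Fin n) : SnMonoid n H :=
  snPi n H (FreeMonoid.of i)

/-- The element `z = a_1 a_2 ⋯ a_n` of `S_n(H)`. -/
def zElem (n : ℕ) (H : Set (Equiv.Perm (Fin n))) : SnMonoid n H :=
  snPi n H (permWord 1)

/-- A (two-sided) ideal-like subset `I` of a monoid is prime if for all `u, v ∉ I`
there is `s` with `u * s * v ∉ I`. -/
def MonoidIdeal.IsPrime {M : Type*} [Monoid M] (I : Set M) : Prop :=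
  ∀ u v : M, u ∉ I → v ∉ I → ∃ s : M, u * s * v ∉ I

/-!
Let `R` be a set of nonempty words with pairwise distinct first letters, and identify all words of
`R` with one another. Following Adjan, left cancellation is proved by induction on the number of
elementary swaps in a derivation of `a u = a v`. If no swap touches the first letter, the same swaps
derive `u = v`. Otherwise two consecutive swaps at the head have the form `a s x → b t x` and
`b t y → c r y`, with the same `t` because a word of `R` is determined by its first letter `b`. The
swaps in between derive `t x = t y`, hence `x = y` by induction, so the two swaps at the head merge
into the single one `a s y → c r y`; in the end they merge to one swap `a s x → a s x`, which is
trivial. Right cancellation follows by reversing words.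
-/

section Swaps

variable {α : Type*}

/-- An elementary transition of the presentation identifying all words of `R`: some factor lying
in `R` is replaced by another word of `R`. The recursion runs through the letters in front of that
factor, so that swaps touching the first letter are singled out by a constructor. -/
inductive FactorSwap (R : Set (List α)) : List α → List α → Prop
  | head {p q : List α} (hp : p ∈ R) (hq : q ∈ R) (x : List α) : FactorSwap R (p ++ x) (q ++ x)
  | cons (a : α) {u v : List α} (h : FactorSwap R u v) : FactorSwap R (a :: u) (a :: v)

/-- `SwapDerivable R m u v`: the word `v` arises from `u` by at most `m` elementary transitions.
The bound is what the proof of left cancellation recurses on. -/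
inductive SwapDerivable (R : Set (List α)) : ℕ → List α → List α → Prop
  | refl (m : ℕ) (u : List α) : SwapDerivable R m u u
  | tail {m : ℕ} {u v w : List α} (h : SwapDerivable R m u v) (hs : FactorSwap R v w) :
      SwapDerivable R (m + 1) u w

/-- The effect on the first letter of a derivation with at most `m` transitions starting at
`a :: u`: either the first letter is never touched, or a single transition
`a :: (s ++ x) → b :: (t ++ x)` touches it. -/
inductive HeadDerivable (R : Set (List α)) (m : ℕ) (a : α) (u : List α) : List α → Prop
  | keep {v : List α} (h : SwapDerivable R m u v) : HeadDerivable R m a u (a :: v)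
  | swap {b : α} {s t x v : List α} {i j : ℕ} (hs : a :: s ∈ R) (ht : b :: t ∈ R)
      (hu : SwapDerivable R i u (s ++ x)) (hv : SwapDerivable R j (t ++ x) v)
      (hij : i + j < m) : HeadDerivable R m a u (b :: v)

variable {R : Set (List α)} {m k : ℕ} {a : α} {u v w : List α}

namespace FactorSwap

theorem symm (h : FactorSwap R u v) : FactorSwap R v u := by
  induction h with
  | head hp hq x => exact head hq hp x
  | cons a _ ih => exact cons a ih

theorem append_left (p : List α) (h : FactorSwap R u v) : FactorSwap R (p ++ u) (p ++ v) := by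
  induction p with
  | nil => exact h
  | cons a p ih => exact cons a ih

theorem append_right (h : FactorSwap R u v) (q : List α) : FactorSwap R (u ++ q) (v ++ q) := by
  induction h with
  | head hp hq x => simpa only [List.append_assoc] using head hp hq (x ++ q)
  | cons a _ ih => exact cons a ih

theorem reverse (h : FactorSwap R u v) :
    FactorSwap (List.reverse '' R) u.reverse v.reverse := by
  induction h with
  | head hp hq x =>
    simpa only [List.reverse_append, List.append_nil] using
      (head (Set.mem_image_of_mem _ hp) (Set.mem_image_of_mem _ hq) []).append_left x.reverse
  | cons a _ ih => simpa only [List.reverse_cons] using ih.append_right [a]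

theorem cons_cases (hnil : [] ∉ R) (h : FactorSwap R (a :: u) w) :
    (∃ b s t x, a :: s ∈ R ∧ b :: t ∈ R ∧ u = s ++ x ∧ w = b :: (t ++ x)) ∨
      ∃ v, FactorSwap R u v ∧ w = a :: v := by
  generalize hau : a :: u = u' at h
  cases h with
  | @head p q hp hq x =>
    obtain ⟨c, s, rfl⟩ := List.exists_cons_of_ne_nil (ne_of_mem_of_not_mem hp hnil)
    obtain ⟨b, t, rfl⟩ := List.exists_cons_of_ne_nil (ne_of_mem_of_not_mem hq hnil)
    obtain ⟨rfl, rfl⟩ := List.cons.inj hau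
    exact .inl ⟨b, s, t, x, hp, hq, rfl, rfl⟩
  | cons c h =>
    obtain ⟨rfl, rfl⟩ := List.cons.inj hau
    exact .inr ⟨_, h, rfl⟩

end FactorSwap

namespace SwapDerivable

theorem mono (h : SwapDerivable R m u v) (hmk : m ≤ k) : SwapDerivable R k u v := by
  induction h generalizing k with
  | refl => exact refl k _
  | tail _ hs ih =>
    obtain ⟨k, rfl⟩ := Nat.exists_eq_add_one_of_ne_zero (Nat.ne_zero_of_lt hmk)
    exact tail (ih (Nat.le_of_succ_le_succ hmk)) hs

theorem trans (h : SwapDerivable R m u v) (h' : SwapDerivable R k v w) :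
    SwapDerivable R (m + k) u w := by
  induction h' with
  | refl => exact h.mono (Nat.le_add_right _ _)
  | tail _ hs ih => exact tail (ih h) hs

theorem symm (h : SwapDerivable R m u v) : SwapDerivable R m v u := by
  induction h with
  | refl => exact refl _ _
  | @tail m _ _ _ _ hs ih =>
    simpa only [Nat.add_comm] using (tail (refl 0 _) hs.symm).trans ih

theorem append_left (p : List α) (h : SwapDerivable R m u v) :
    SwapDerivable R m (p ++ u) (p ++ v) := by
  induction h with
  | refl => exact refl _ _
  | tail _ hs ih => exact tail ih (hs.append_left p)

theorem append_right (h : SwapDerivable R m u v) (q : List α) :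
    SwapDerivable R m (u ++ q) (v ++ q) := by
  induction h with
  | refl => exact refl _ _
  | tail _ hs ih => exact tail ih (hs.append_right q)

theorem reverse (h : SwapDerivable R m u v) :
    SwapDerivable (List.reverse '' R) m u.reverse v.reverse := by
  induction h with
  | refl => exact refl _ _
  | tail _ hs ih => exact tail ih hs.reverse

end SwapDerivable

theorem eq_of_cons_mem_of_injOn_head? (hR : Set.InjOn List.head? R) {s t : List α}
    (hs : a :: s ∈ R) (ht : a :: t ∈ R) : s = t :=
  List.tail_eq_of_cons_eq (hR hs ht rfl)

theorem HeadDerivable.tail (hnil : [] ∉ R) (hR : Set.InjOn List.head? R)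
    (hcancel : ∀ k < m, ∀ p x y, SwapDerivable R k (p ++ x) (p ++ y) → SwapDerivable R k x y)
    (h : HeadDerivable R m a u v) (hvw : FactorSwap R v w) : HeadDerivable R (m + 1) a u w := by
  cases h with
  | keep h =>
    obtain ⟨c, s, r, y, hs, hr, rfl, rfl⟩ | ⟨v', hv', rfl⟩ := hvw.cons_cases hnil
    · exact .swap hs hr h (.refl 0 _) m.lt_succ_self
    · exact .keep (h.tail hv')
  | @swap b s t x v i j hs ht hu hv hij =>
    obtain ⟨c, t', r, y, ht', hr, rfl, rfl⟩ | ⟨v', hv', rfl⟩ := hvw.cons_cases hnil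
    · obtain rfl := eq_of_cons_mem_of_injOn_head? hR ht ht'
      have hxy : SwapDerivable R j x y := hcancel j (by omega) t x y hv
      exact .swap hs hr (hu.trans (hxy.append_left s)) (.refl 0 _) (by omega)
    · exact .swap hs ht hu (hv.tail hv') (by omega)

namespace SwapDerivable

theorem headDerivable (hnil : [] ∉ R) (hR : Set.InjOn List.head? R)
    (hcancel : ∀ k < m, ∀ p x y, SwapDerivable R k (p ++ x) (p ++ y) → SwapDerivable R k x y)
    (h : SwapDerivable R m (a :: u) w) : HeadDerivable R m a u w := by
  generalize hau : a :: u = u' at h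
  induction h with
  | refl => exact hau ▸ .keep (refl _ _)
  | tail _ hs ih =>
    have hcancel' := fun k hk => hcancel k (Nat.lt_succ_of_lt hk)
    exact (ih hcancel' hau).tail hnil hR hcancel' hs

theorem of_cons (hnil : [] ∉ R) (hR : Set.InjOn List.head? R)
    (hcancel : ∀ k < m, ∀ p x y, SwapDerivable R k (p ++ x) (p ++ y) → SwapDerivable R k x y)
    (h : SwapDerivable R m (a :: u) (a :: v)) : SwapDerivable R m u v := by
  cases h.headDerivable hnil hR hcancel with
  | keep h => exact h
  | swap hs ht hu hv hij =>
    obtain rfl := eq_of_cons_mem_of_injOn_head? hR hs ht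
    exact (hu.trans hv).mono hij.le

theorem of_append_left (hnil : [] ∉ R) (hR : Set.InjOn List.head? R) (p : List α)
    (h : SwapDerivable R m (p ++ u) (p ++ v)) : SwapDerivable R m u v := by
  induction m using Nat.strong_induction_on generalizing p u v with
  | _ m hcancel =>
    induction p with
    | nil => exact h
    | cons a p ih => exact ih (h.of_cons hnil hR fun k hk p _ _ => hcancel k hk p)

theorem of_append_right (hnil : [] ∉ R) (hR : Set.InjOn List.getLast? R) (q : List α)
    (h : SwapDerivable R m (u ++ q) (v ++ q)) : SwapDerivable R m u v := by
  have hnil' : [] ∉ List.reverse '' R := by simpa using hnil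
  have hR' : Set.InjOn List.head? (List.reverse '' R) :=
    .image_of_comp (by simpa only [Function.comp_def, List.head?_reverse] using hR)
  have hrev : SwapDerivable (List.reverse '' R) m (q.reverse ++ u.reverse)
      (q.reverse ++ v.reverse) := by
    simpa only [List.reverse_append] using h.reverse
  simpa [Set.image_image] using (hrev.of_append_left hnil' hR').reverse

end SwapDerivable

end Swaps

section Identify

variable {α : Type*} {R : Set (List α)}

/-- The congruence on the free monoid generated by identifying all words of `R` with one
another. -/
def identifyCon (R : Set (List α)) : Con (FreeMonoid α) :=
  conGen fun u v => u.toList ∈ R ∧ v.toList ∈ R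

theorem FactorSwap.identifyCon_ofList {u v : List α} (h : FactorSwap R u v) :
    identifyCon R (FreeMonoid.ofList u) (FreeMonoid.ofList v) := by
  induction h with
  | head hp hq x => exact (identifyCon R).mul (ConGen.Rel.of _ _ ⟨hp, hq⟩) (.refl _)
  | cons a _ ih => exact (identifyCon R).mul (.refl (FreeMonoid.of a)) ih

theorem SwapDerivable.identifyCon_ofList {m : ℕ} {u v : List α} (h : SwapDerivable R m u v) :
    identifyCon R (FreeMonoid.ofList u) (FreeMonoid.ofList v) := by
  induction h with
  | refl => exact (identifyCon R).refl _
  | tail _ hs ih => exact (identifyCon R).trans ih hs.identifyCon_ofList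

theorem identifyCon_iff {u v : FreeMonoid α} :
    identifyCon R u v ↔ ∃ m, SwapDerivable R m u.toList v.toList := by
  constructor
  · intro h
    induction h with
    | of u v h =>
      exact ⟨1, by simpa using (SwapDerivable.refl 0 _).tail (FactorSwap.head h.1 h.2 [])⟩
    | refl => exact ⟨0, .refl 0 _⟩
    | symm _ ih => exact ih.imp fun _ => .symm
    | trans _ _ ih ih' =>
      obtain ⟨_, h⟩ := ih
      obtain ⟨_, h'⟩ := ih'
      exact ⟨_, h.trans h'⟩
    | mul _ _ ih ih' =>
      obtain ⟨_, h⟩ := ih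
      obtain ⟨_, h'⟩ := ih'
      exact ⟨_, (h.append_right _).trans (h'.append_left _)⟩
  · rintro ⟨_, h⟩
    exact h.identifyCon_ofList

theorem isLeftCancelMul_identifyCon (hnil : [] ∉ R) (hR : Set.InjOn List.head? R) :
    IsLeftCancelMul (identifyCon R).Quotient where
  mul_left_cancel a b c h := by
    induction a using Con.induction_on with | _ a
    induction b using Con.induction_on with | _ b
    induction c using Con.induction_on with | _ c
    obtain ⟨m, hm⟩ := identifyCon_iff.mp ((Con.eq _).mp h)
    exact (Con.eq _).mpr (identifyCon_iff.mpr ⟨m, hm.of_append_left hnil hR a.toList⟩)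

theorem isRightCancelMul_identifyCon (hnil : [] ∉ R) (hR : Set.InjOn List.getLast? R) :
    IsRightCancelMul (identifyCon R).Quotient where
  mul_right_cancel a b c h := by
    induction a using Con.induction_on with | _ a
    induction b using Con.induction_on with | _ b
    induction c using Con.induction_on with | _ c
    obtain ⟨m, hm⟩ := identifyCon_iff.mp ((Con.eq _).mp h)
    exact (Con.eq _).mpr (identifyCon_iff.mpr ⟨m, hm.of_append_right hnil hR a.toList⟩)

end Identify

section PermWords

variable {n : ℕ} {H : Set (Equiv.Perm (Fin n))}

theorem snCon_eq_identifyCon :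
    snCon n H = identifyCon ((fun σ => (permWord σ).toList) '' insert 1 H) := by
  apply le_antisymm
  · refine Con.conGen_mono ?_
    rintro _ _ ⟨σ, hσ, rfl, rfl⟩
    exact ⟨⟨1, Set.mem_insert _ _, rfl⟩, ⟨σ, Set.mem_insert_of_mem _ hσ, rfl⟩⟩
  · have hword : ∀ σ ∈ insert 1 H, snCon n H (permWord 1) (permWord σ) := by
      rintro σ (rfl | hσ)
      · exact (snCon n H).refl _
      · exact ConGen.Rel.of _ _ ⟨σ, hσ, rfl, rfl⟩
    refine Con.conGen_le.mpr ?_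
    rintro _ _ ⟨⟨σ, hσ, hu⟩, ⟨τ, hτ, hv⟩⟩
    obtain rfl := FreeMonoid.toList.injective hu
    obtain rfl := FreeMonoid.toList.injective hv
    exact (snCon n H).trans ((snCon n H).symm (hword σ hσ)) (hword τ hτ)

theorem head?_toList_permWord (hn : 0 < n) (σ : Equiv.Perm (Fin n)) :
    (permWord σ).toList.head? = some (σ ⟨0, hn⟩) := by
  simp [permWord, List.head?_eq_getElem?, hn]

theorem getLast?_toList_permWord (hn : 0 < n) (σ : Equiv.Perm (Fin n)) :
    (permWord σ).toList.getLast? = some (σ ⟨n - 1, Nat.sub_one_lt_of_lt hn⟩) := by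
  simp [permWord, List.getLast?_eq_getElem?, hn]

end PermWords

theorem injOn_apply_insert_one_of_stabilizer_trivial {α : Type*} {H : Subgroup (Equiv.Perm α)}
    {k : α} (hk : ∀ σ ∈ H, σ k = k → σ = 1) :
    Set.InjOn (fun σ : Equiv.Perm α => σ k) (insert 1 (H : Set (Equiv.Perm α))) := by
  rw [Set.insert_eq_of_mem H.one_mem]
  intro σ hσ τ hτ h
  have hfix : (τ⁻¹ * σ) k = k := Equiv.Perm.inv_eq_iff_eq.mpr h
  exact (inv_mul_eq_one.mp (hk _ (H.mul_mem (H.inv_mem hτ) hσ) hfix)).symm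

theorem stmt1_general (n : ℕ) (hn : 1 ≤ n) (H : Set (Equiv.Perm (Fin n)))
    (hfirst : Set.InjOn (fun σ : Equiv.Perm (Fin n) => σ ⟨0, hn⟩) (insert 1 H))
    (hlast : Set.InjOn (fun σ : Equiv.Perm (Fin n) => σ ⟨n - 1, Nat.sub_one_lt_of_lt hn⟩)
      (insert 1 H)) :
    ∀ a b c : SnMonoid n H, (a * b = a * c → b = c) ∧ (b * a = c * a → b = c) := by
  have hnil : [] ∉ (fun σ => (permWord σ).toList) '' insert 1 H := by
    rintro ⟨σ, -, hσ⟩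
    simpa [hσ] using head?_toList_permWord hn σ
  have hhead : Set.InjOn List.head? ((fun σ => (permWord σ).toList) '' insert 1 H) :=
    .image_of_comp fun σ hσ τ hτ h => hfirst hσ hτ <| by
      simpa only [Function.comp_apply, head?_toList_permWord hn, Option.some_inj] using h
  have hgetLast : Set.InjOn List.getLast? ((fun σ => (permWord σ).toList) '' insert 1 H) :=
    .image_of_comp fun σ hσ τ hτ h => hlast hσ hτ <| by
      simpa only [Function.comp_apply, getLast?_toList_permWord hn, Option.some_inj] using h
  have := isLeftCancelMul_identifyCon hnil hhead
  have := isRightCancelMul_identifyCon hnil hgetLast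
  unfold SnMonoid
  rw [snCon_eq_identifyCon]
  exact fun _ _ _ => ⟨mul_left_cancel, mul_right_cancel⟩

theorem stmt1 (n : ℕ) (hn : 1 ≤ n) (H : Subgroup (Equiv.Perm (Fin n)))
    (hab : ∀ σ ∈ H, ∀ τ ∈ H, σ * τ = τ * σ)
    (h1 : ∀ σ ∈ H, σ ⟨0, by omega⟩ = ⟨0, by omega⟩ → σ = 1)
    (h2 : ∀ σ ∈ H, σ ⟨n - 1, by omega⟩ = ⟨n - 1, by omega⟩ → σ = 1) :
    ∀ a b c : SnMonoid n ↑H, (a * b = a * c → b = c) ∧ (b * a = c * a → b = c) :=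
  stmt1_general n hn H (injOn_apply_insert_one_of_stabilizer_trivial h1)
    (injOn_apply_insert_one_of_stabilizer_trivial h2)
end

section
/- Let H be an abelian subgroup of Sym_n with (1,2,...,n) ∉ H, n ≥ 3, suppose the stabilizer of n in H is trivial, and let π : FM_n → S_n(H) be the canonical projection from the free monoid on x_1,...,x_n. If w ∈ FM_n and 1 ≤ i,j ≤ n are such that π(w x_i x_j) ∈ S z, where z = a_1⋯a_n, then there exists σ ∈ H with i = σ(n−1) and j = σ(n). -/
/-!
Compare last letters: an equality `s a_i = t a_j` in `S_n(H)` forces `s = t` and `i = j` unless both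
products end in relator words, because the last letter changes only when a relation is applied to a
block at the end. If `π(w x_i x_j) ∈ S z`, cancelling once gives `j = τ(n)` and
`π(w x_i) = t a_{τ(1)} ⋯ a_{τ(n-1)}` with `τ ∈ H`. Cancelling again gives `i = τ(n-1)`, unless
`t a_{τ(1)} ⋯ a_{τ(n-2)} = s a_{σ(1)} ⋯ a_{σ(n-1)}` and `τ(n-1) = σ(n)` for some `σ ∈ H`.

In the latter case the one-line words of `τ` and `σ` overlap with offset one, and cancelling further
letters extends the overlap to the whole word: `τ(x) = σ(x+1)` for all `x < n`, so
`σ⁻¹τ = (1,2,…,n) ∈ H`. When two further relator words, of `τ'` and `σ'`, block the cancellation,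
induction on the length shows that `τ'` and `σ'` are shifts of `τ` and `σ`. Commutativity and the
trivial stabilizer of `n` then give `σ' = τ'`, and two shifts of the same word overlap as required.
-/

theorem eq_one_or_exists_eq_mul_of {α : Type*} (u : FreeMonoid α) :
    u = 1 ∨ ∃ v i, u = v * FreeMonoid.of i :=
  (List.eq_nil_or_concat u.toList).imp id fun ⟨v, i, h⟩ => ⟨FreeMonoid.ofList v, i, by
    rwa [List.concat_eq_append] at h⟩

section Perm

variable {α : Type*} {H : Subgroup (Equiv.Perm α)} {z : α}

theorem perm_eq_of_apply_eq (hstab : ∀ σ ∈ H, σ z = z → σ = 1)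
    {σ τ : Equiv.Perm α} (hσ : σ ∈ H) (hτ : τ ∈ H) (h : σ z = τ z) : σ = τ := by
  refine (inv_mul_eq_one.mp (hstab (τ⁻¹ * σ) (H.mul_mem (H.inv_mem hτ) hσ) ?_)).symm
  rw [Equiv.Perm.mul_apply, h, Equiv.Perm.inv_eq_iff_eq]

theorem perm_eq_of_commute_of_apply_eq (hab : ∀ σ ∈ H, ∀ τ ∈ H, σ * τ = τ * σ)
    (hstab : ∀ σ ∈ H, σ z = z → σ = 1) {σ τ σ' τ' : Equiv.Perm α}
    (hσ : σ ∈ H) (hτ : τ ∈ H) (hσ' : σ' ∈ H) (hτ' : τ' ∈ H) {x y : α}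
    (hσx : σ x = σ' z) (hτx : τ x = τ' y) (hσy : σ y = τ z) : σ' = τ' := by
  refine perm_eq_of_apply_eq hstab hσ' hτ' (τ.injective ?_)
  calc τ (σ' z) = (τ * σ) x := by rw [Equiv.Perm.mul_apply, hσx]
    _ = σ (τ x) := by rw [hab τ hτ σ hσ, Equiv.Perm.mul_apply]
    _ = (σ * τ') y := by rw [hτx, Equiv.Perm.mul_apply]
    _ = τ' (σ y) := by rw [hab σ hσ τ' hτ', Equiv.Perm.mul_apply]
    _ = (τ' * τ) z := by rw [hσy, Equiv.Perm.mul_apply]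
    _ = τ (τ' z) := by rw [hab τ' hτ' τ hτ, Equiv.Perm.mul_apply]

theorem eq_finRotate_of_castSucc {n : ℕ} {σ : Equiv.Perm (Fin (n + 1))}
    (h : ∀ i : Fin n, σ i.castSucc = i.succ) : σ = finRotate (n + 1) := by
  have hlast : σ (Fin.last n) = 0 := by
    by_contra hne
    obtain ⟨i, hi⟩ := Fin.exists_succ_eq.mpr hne
    exact Fin.castSucc_ne_last i (σ.injective ((h i).trans hi))
  ext i : 1
  induction i using Fin.lastCases with
  | last => rw [hlast, finRotate_last]
  | cast i => rw [h, finRotate_apply, Fin.coeSucc_eq_succ]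

end Perm

section Length

variable (n : ℕ) (H : Set (Equiv.Perm (Fin n)))

/-- The word-length homomorphism on `S_n(H)`, well defined because both sides of each defining
relation have length `n`. -/
def snLength : SnMonoid n H →* Multiplicative ℕ :=
  (snCon n H).lift (FreeMonoid.lift fun _ => Multiplicative.ofAdd 1) <| Con.conGen_le.mpr <| by
    rintro _ _ ⟨σ, -, rfl, rfl⟩
    simp [Con.ker_rel, permWord, FreeMonoid.lift_ofList, List.map_ofFn, Function.comp_def]

theorem snLength_aGen (i : Fin n) : snLength n H (aGen n H i) = Multiplicative.ofAdd 1 := rfl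

theorem wellFounded_eq_mul_aGen :
    WellFounded fun s t : SnMonoid n H => ∃ i, t = s * aGen n H i := by
  refine Subrelation.wf ?_ (measure fun s => (snLength n H s).toAdd).wf
  rintro s _ ⟨i, rfl⟩
  change (snLength n H s).toAdd < (snLength n H (s * aGen n H i)).toAdd
  simp [snLength_aGen]

end Length

section PermPrefix

variable {n : ℕ}

/-- The word `a_{σ(1)} ⋯ a_{σ(r)}`; for `r > n` it is the whole word `a_{σ(1)} ⋯ a_{σ(n)}`. -/
def permPrefix (σ : Equiv.Perm (Fin n)) (r : ℕ) : FreeMonoid (Fin n) :=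
  FreeMonoid.ofList ((List.ofFn σ).take r)

theorem permPrefix_succ (σ : Equiv.Perm (Fin n)) {r : ℕ} (hr : r < n) :
    permPrefix σ (r + 1) = permPrefix σ r * FreeMonoid.of (σ ⟨r, hr⟩) := by
  simp [permPrefix, List.take_add_one, hr, FreeMonoid.ofList_append]

theorem permWord_eq_permPrefix_mul_of (σ : Equiv.Perm (Fin (n + 1))) :
    permWord σ = permPrefix σ n * FreeMonoid.of (σ (Fin.last n)) := by
  rw [Fin.last, ← permPrefix_succ]
  simp [permPrefix, permWord, List.take_of_length_le]

end PermPrefix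

section LastStep

variable {n : ℕ} (H : Set (Equiv.Perm (Fin n)))

/-- The last letter of a word, paired with the image in `S_n(H)` of the word before that letter;
`none` for the empty word. -/
def lastStep (u : FreeMonoid (Fin n)) : Option (SnMonoid n H × Fin n) :=
  u.toList.getLast?.map fun i => (snPi n H (FreeMonoid.ofList u.toList.dropLast), i)

theorem lastStep_mul_of (u : FreeMonoid (Fin n)) (i : Fin n) :
    lastStep H (u * FreeMonoid.of i) = some (snPi n H u, i) := by
  simp [lastStep]

theorem lastStep_mul (u v : FreeMonoid (Fin n)) :
    lastStep H (u * v) =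
      (lastStep H v).elim (lastStep H u) fun b => some (snPi n H u * b.1, b.2) := by
  obtain rfl | ⟨v, i, rfl⟩ := eq_one_or_exists_eq_mul_of v
  · rw [mul_one]; rfl
  · rw [← mul_assoc, lastStep_mul_of, lastStep_mul_of, map_mul, Option.elim_some]

end LastStep

section Blocks

variable {n : ℕ} {H : Set (Equiv.Perm (Fin (n + 1)))}

variable (H) in
/-- The pairs `(s, i)` such that the product `s a_i` exhibits a relator word
`a_{τ(1)} ⋯ a_{τ(n + 1)}`, `τ ∈ H`, ending in the letter `a_i`. -/
def blockEnds : Set (SnMonoid (n + 1) H × Fin (n + 1)) :=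
  {b | ∃ t, ∃ τ ∈ H, b.1 = t * snPi (n + 1) H (permPrefix τ n) ∧ b.2 = τ (Fin.last n)}

theorem mul_mem_blockEnds (s : SnMonoid (n + 1) H) {b : SnMonoid (n + 1) H × Fin (n + 1)}
    (hb : b ∈ blockEnds H) : (s * b.1, b.2) ∈ blockEnds H := by
  obtain ⟨t, τ, hτ, hs, hi⟩ := hb
  exact ⟨s * t, τ, hτ, by rw [hs, mul_assoc], hi⟩

theorem lastStep_permWord_mem_blockEnds {σ : Equiv.Perm (Fin (n + 1))} (hσ : σ ∈ H) :
    lastStep H (permWord σ) ∈ some '' blockEnds H := by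
  rw [permWord_eq_permPrefix_mul_of, lastStep_mul_of]
  exact ⟨_, ⟨1, σ, hσ, (one_mul _).symm, rfl⟩, rfl⟩

theorem lastStep_mul_mem_blockEnds (u : FreeMonoid (Fin (n + 1))) {v : FreeMonoid (Fin (n + 1))}
    (hv : lastStep H v ∈ some '' blockEnds H) : lastStep H (u * v) ∈ some '' blockEnds H := by
  obtain ⟨b, hb, hv⟩ := hv
  rw [lastStep_mul, ← hv]
  exact ⟨_, mul_mem_blockEnds _ hb, rfl⟩

theorem lastStep_eq_or_mem_blockEnds_of_snCon (h1 : 1 ∈ H) {u v : FreeMonoid (Fin (n + 1))}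
    (h : snCon (n + 1) H u v) :
    lastStep H u = lastStep H v ∨
      lastStep H u ∈ some '' blockEnds H ∧ lastStep H v ∈ some '' blockEnds H := by
  change ConGen.Rel _ u v at h
  induction h with
  | of u v h =>
    obtain ⟨σ, hσ, rfl, rfl⟩ := h
    exact .inr ⟨lastStep_permWord_mem_blockEnds h1, lastStep_permWord_mem_blockEnds hσ⟩
  | refl u => exact .inl rfl
  | symm _ ih => exact ih.imp Eq.symm And.symm
  | trans _ _ ih ih' => grind
  | @mul u v u' v' h _ ih ih' =>
    have huv : snPi (n + 1) H u = snPi (n + 1) H v := (Con.eq _).mpr h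
    obtain ih' | ⟨hu', hv'⟩ := ih'
    · rw [lastStep_mul, lastStep_mul, ih', huv]
      cases lastStep H v' with
      | none => exact ih
      | some b => exact .inl rfl
    · exact .inr ⟨lastStep_mul_mem_blockEnds u hu', lastStep_mul_mem_blockEnds v hv'⟩

theorem eq_or_mem_blockEnds_of_mul_aGen_eq (h1 : 1 ∈ H) {s t : SnMonoid (n + 1) H}
    {i j : Fin (n + 1)} (h : s * aGen (n + 1) H i = t * aGen (n + 1) H j) :
    s = t ∧ i = j ∨ (s, i) ∈ blockEnds H ∧ (t, j) ∈ blockEnds H := by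
  obtain ⟨u, rfl⟩ := Con.mk'_surjective s
  obtain ⟨v, rfl⟩ := Con.mk'_surjective t
  have huv := lastStep_eq_or_mem_blockEnds_of_snCon h1 ((Con.eq _).mp h)
  simpa [lastStep_mul_of, snPi] using huv

theorem mem_blockEnds_of_mul_aGen_eq_mul_zElem (h1 : 1 ∈ H) {s t : SnMonoid (n + 1) H}
    {i : Fin (n + 1)} (h : s * aGen (n + 1) H i = t * zElem (n + 1) H) :
    (s, i) ∈ blockEnds H := by
  rw [zElem, permWord_eq_permPrefix_mul_of, map_mul, ← mul_assoc] at h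
  obtain h | ⟨hs, -⟩ := eq_or_mem_blockEnds_of_mul_aGen_eq h1 h
  · exact ⟨t, 1, h1, h⟩
  · exact hs

end Blocks

section Shift

variable {n : ℕ}

/-- The one-line words of `σ` and `τ` overlap with offset `d` at the positions of `σ` from `r` on:
`σ(x) = τ(x + d)` for every `x ≥ r` such that `x + d` is a position. -/
def IsShiftFrom (d r : ℕ) (σ τ : Equiv.Perm (Fin n)) : Prop :=
  ∀ ⦃x y : Fin n⦄, r ≤ x.val → y.val = x.val + d → σ x = τ y

theorem IsShiftFrom.of_succ {d r : ℕ} {σ τ : Equiv.Perm (Fin n)}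
    (h : IsShiftFrom d (r + 1) σ τ) {x y : Fin n} (hx : x.val = r) (hy : y.val = r + d)
    (hxy : σ x = τ y) : IsShiftFrom d r σ τ := by
  intro x' y' hx' hy'
  obtain hr | hr := hx'.eq_or_lt
  · rwa [show x' = x by lia, show y' = y by lia]
  · exact h hr hy'

theorem isShiftFrom_of_apply_eq_last {d r : ℕ} {σ τ : Equiv.Perm (Fin (n + 1))}
    {x : Fin (n + 1)} (hx : x.val = r) (hrd : r + d = n) (h : σ x = τ (Fin.last n)) :
    IsShiftFrom d r σ τ :=
  IsShiftFrom.of_succ (fun _ _ _ _ => by lia) hx hrd.symm h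

theorem IsShiftFrom.zero_of_common_shift {d e r : ℕ} {σ τ ρ : Equiv.Perm (Fin (n + 1))}
    (h : IsShiftFrom d (r + 1) σ τ) (hrde : r + d + e = n) (hσ : IsShiftFrom (d + e) 0 σ ρ)
    (hτ : IsShiftFrom e 0 τ ρ) : IsShiftFrom d 0 σ τ := by
  intro x y _ hy
  obtain hx | hx := Nat.lt_or_ge r x
  · exact h hx hy
  · exact (hσ (y := ⟨x + d + e, by lia⟩) x.val.zero_le (by lia)).trans
      (hτ y.val.zero_le (by lia)).symm

theorem IsShiftFrom.zero_of_mul_permPrefix_eq {H : Subgroup (Equiv.Perm (Fin (n + 1)))}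
    (hab : ∀ σ ∈ H, ∀ τ ∈ H, σ * τ = τ * σ)
    (hstab : ∀ σ ∈ H, σ (Fin.last n) = Fin.last n → σ = 1)
    {r d : ℕ} (hrd : r + d ≤ n) {s t : SnMonoid (n + 1) H} {σ τ : Equiv.Perm (Fin (n + 1))}
    (hσ : σ ∈ H) (hτ : τ ∈ H) (hshift : IsShiftFrom d r σ τ)
    (h : s * snPi (n + 1) H (permPrefix σ r) = t * snPi (n + 1) H (permPrefix τ (r + d))) :
    IsShiftFrom d 0 σ τ := by
  generalize hm : s * snPi (n + 1) H (permPrefix σ r) = m at h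
  induction m using (wellFounded_eq_mul_aGen (n + 1) (H : Set _)).induction
    generalizing r d s t σ τ with
  | _ m ih =>
    cases r with
    | zero => exact hshift
    | succ r =>
      rw [permPrefix_succ σ (by lia), map_mul, ← mul_assoc] at hm
      rw [Nat.add_right_comm, permPrefix_succ τ (by lia), map_mul, ← mul_assoc] at h
      obtain ⟨hst, hr⟩ | ⟨⟨s', σ', hσ', hs, hσr⟩, ⟨t', τ', hτ', ht, hτr⟩⟩ :=
        eq_or_mem_blockEnds_of_mul_aGen_eq H.one_mem (hm.trans h)
      · exact ih _ ⟨_, hm.symm⟩ (by lia) hσ hτ (hshift.of_succ rfl rfl hr) rfl hst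
      · obtain ⟨e, he⟩ : ∃ e, r + d + e = n := ⟨n - (r + d), by lia⟩
        have hσσ' : IsShiftFrom (d + e) 0 σ σ' :=
          ih _ ⟨_, hm.symm⟩ (by lia) hσ hσ' (isShiftFrom_of_apply_eq_last rfl (by lia) hσr) rfl
            (by rwa [← add_assoc, he])
        have hττ' : IsShiftFrom e 0 τ τ' :=
          ih _ ⟨_, h⟩ (by lia) hτ hτ' (isShiftFrom_of_apply_eq_last rfl he hτr) rfl (by rwa [he])
        have hσ'τ' : σ' = τ' :=
          perm_eq_of_commute_of_apply_eq hab hstab hσ hτ hσ' hτ' (y := ⟨r + e, by lia⟩) hσr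
            (hττ' (Nat.zero_le _) rfl)
            (hshift (by change r + 1 ≤ r + e; lia) (by change n = r + e + d; lia))
        exact hshift.zero_of_common_shift he hσσ' (hσ'τ' ▸ hττ')

end Shift

theorem finRotate_mem_of_mem_blockEnds {n : ℕ} {H : Subgroup (Equiv.Perm (Fin (n + 2)))}
    (hab : ∀ σ ∈ H, ∀ τ ∈ H, σ * τ = τ * σ)
    (hstab : ∀ σ ∈ H, σ (Fin.last (n + 1)) = Fin.last (n + 1) → σ = 1)
    {t : SnMonoid (n + 2) H} {τ : Equiv.Perm (Fin (n + 2))} (hτ : τ ∈ H)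
    (h : (t * snPi (n + 2) H (permPrefix τ n), τ (Fin.last n).castSucc) ∈ blockEnds (H : Set _)) :
    finRotate (n + 2) ∈ H := by
  obtain ⟨s, σ, hσ, hprefix, hlast⟩ := h
  have hshift : IsShiftFrom 1 0 τ σ :=
    (isShiftFrom_of_apply_eq_last rfl rfl hlast).zero_of_mul_permPrefix_eq hab hstab le_rfl hτ hσ
      hprefix
  have hrot : σ⁻¹ * τ = finRotate (n + 2) := eq_finRotate_of_castSucc fun i => by
    rw [Equiv.Perm.mul_apply, Equiv.Perm.inv_eq_iff_eq, hshift i.castSucc.val.zero_le i.val_succ]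
  exact hrot ▸ H.mul_mem (H.inv_mem hσ) hτ

theorem stmt9 (n : ℕ) (hn : 3 ≤ n) (H : Subgroup (Equiv.Perm (Fin n)))
    (hab : ∀ σ ∈ H, ∀ τ ∈ H, σ * τ = τ * σ) (hrot : finRotate n ∉ H)
    (hstab : ∀ σ ∈ H, σ ⟨n - 1, by omega⟩ = ⟨n - 1, by omega⟩ → σ = 1)
    (w : FreeMonoid (Fin n)) (i j : Fin n)
    (h : ∃ s : SnMonoid n ↑H,
      snPi n ↑H (w * FreeMonoid.of i * FreeMonoid.of j) = s * zElem n ↑H) :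
    ∃ σ ∈ H, i = σ ⟨n - 2, by omega⟩ ∧ j = σ ⟨n - 1, by omega⟩ := by
  obtain ⟨n, rfl⟩ := Nat.exists_eq_add_of_le' (Nat.le_of_succ_le hn)
  obtain ⟨s, hs⟩ := h
  rw [map_mul] at hs
  obtain ⟨t, τ, hτ, hwi, hj⟩ := mem_blockEnds_of_mul_aGen_eq_mul_zElem H.one_mem hs
  refine ⟨τ, hτ, ?_, hj⟩
  rw [map_mul, permPrefix_succ τ (by lia), map_mul, ← mul_assoc] at hwi
  obtain ⟨-, hi⟩ | ⟨-, hblock⟩ := eq_or_mem_blockEnds_of_mul_aGen_eq H.one_mem hwi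
  · exact hi
  · exact absurd (finRotate_mem_of_mem_blockEnds hab hstab hτ hblock) hrot
end
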